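/- For every complex number s that is not a nonpositive integer and with 2^{s−1} ≠ 1, the Dirichlet eta function satisfies η(1−s) = −((2^s − 1) / ((2^{s−1} − 1) · π^s)) · cos(πs/2) · Γ(s) · η(s). -/

import Mathlib

/-- The Dirichlet eta function `η(s) = (1 - 2^(1-s)) ζ(s)`. -/
noncomputable def dirichletEta (s : ℂ) : ℂ := (1 - (2 : ℂ) ^ (1 - s)) * riemannZeta s

theorem two_mul_two_pi_cpow_neg (s : ℂ) :
    2 * (2 * (Real.pi : ℂ)) ^ (-s) = ((2 : ℂ) ^ (s - 1) * (Real.pi : ℂ) ^ s)⁻¹ := by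
  have mul_cpow : (2 * (Real.pi : ℂ)) ^ s = 2 ^ s * (Real.pi : ℂ) ^ s :=
    mod_cast Complex.mul_cpow_ofReal_nonneg zero_le_two Real.pi_pos.le s
  rw [Complex.cpow_neg, mul_cpow, Complex.cpow_sub _ _ two_ne_zero, Complex.cpow_one]
  field_simp

theorem dirichletEta_one_sub (s : ℂ) :
    dirichletEta (1 - s) = (1 - (2 : ℂ) ^ s) * riemannZeta (1 - s) := by
  rw [dirichletEta, sub_sub_cancel]

theorem two_cpow_mul_dirichletEta (s : ℂ) :
    (2 : ℂ) ^ (s - 1) * dirichletEta s = ((2 : ℂ) ^ (s - 1) - 1) * riemannZeta s := by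
  have cpow_mul_cpow : (2 : ℂ) ^ (s - 1) * 2 ^ (1 - s) = 1 := by
    rw [← Complex.cpow_add _ _ two_ne_zero, sub_add_sub_cancel, sub_self, Complex.cpow_zero]
  rw [dirichletEta, ← mul_assoc, mul_one_sub, cpow_mul_cpow]

theorem riemannZeta_eq_div_mul_dirichletEta {s : ℂ} (hs : (2 : ℂ) ^ (s - 1) ≠ 1) :
    riemannZeta s = (2 : ℂ) ^ (s - 1) / ((2 : ℂ) ^ (s - 1) - 1) * dirichletEta s := by
  rw [div_mul_eq_mul_div, two_cpow_mul_dirichletEta, mul_div_cancel_left₀ _ (sub_ne_zero.mpr hs)]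

/-- The functional equation of the Dirichlet eta function:
`η(1-s) = -((2^s - 1)/((2^(s-1) - 1) π^s)) cos(πs/2) Γ(s) η(s)` for `s` not a
nonpositive integer with `2^(s-1) ≠ 1`. -/
theorem dirichletEta_functional_equation (s : ℂ)
    (h1 : ∀ n : ℕ, s ≠ -(n : ℂ)) (h2 : (2 : ℂ) ^ (s - 1) ≠ 1) :
    dirichletEta (1 - s) =
      -(((2 : ℂ) ^ s - 1) / (((2 : ℂ) ^ (s - 1) - 1) * (Real.pi : ℂ) ^ s)) *
        Complex.cos (Real.pi * s / 2) * Complex.Gamma s * dirichletEta s := by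
  have s_ne_one : s ≠ 1 := by
    rintro rfl
    simp at h2
  have two_cpow_ne_zero : (2 : ℂ) ^ (s - 1) ≠ 0 := Complex.cpow_ne_zero_iff.mpr (.inl two_ne_zero)
  calc
    dirichletEta (1 - s)
    _ = (1 - (2 : ℂ) ^ s) * riemannZeta (1 - s) := dirichletEta_one_sub s
    _ = (1 - (2 : ℂ) ^ s) * (((2 : ℂ) ^ (s - 1) * (Real.pi : ℂ) ^ s)⁻¹ * Complex.Gamma s *
          Complex.cos (Real.pi * s / 2) *
          ((2 : ℂ) ^ (s - 1) / ((2 : ℂ) ^ (s - 1) - 1) * dirichletEta s)) := by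
      rw [riemannZeta_one_sub h1 s_ne_one, two_mul_two_pi_cpow_neg,
        ← riemannZeta_eq_div_mul_dirichletEta h2]
    _ = _ := by
      field_simp
      ring
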